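/- arXiv:1202.0364 — 2 statements merged into one kernel-verified Lean document; each statement's English description precedes it below -/
import Mathlib

section
/- A finite simple graph G is a cograph if and only if every induced subgraph G' of G with at least two vertices has a twin, that is, two distinct vertices x and y of G' whose neighborhoods in G' agree outside {x, y}: for every vertex z of G' with z ≠ x and z ≠ y, z is adjacent to x in G' exactly when z is adjacent to y in G'. -/
/-- A graph is a cograph if it has no induced subgraph isomorphic to `P₄`,
the path on four vertices. Graph embeddings capture induced subgraphs. -/
def IsCograph {V : Type*} (G : SimpleGraph V) : Prop :=
  IsEmpty (SimpleGraph.pathGraph 4 ↪g G)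

/-!
Being a cograph passes to induced subgraphs and, `P₄` being self-complementary, to complements.
The heart of the matter is that a connected cograph `G` stays connected when a non-universal
vertex `v` is deleted. Otherwise pick a non-neighbour `u` of `v`. Connectivity of `G` puts a
neighbour of `v` in every component of `G - v`, so walking from `u` to such a neighbour inside the
component of `u` crosses an edge `ab` with `a` not adjacent and `b` adjacent to `v`; with a
neighbour `x` of `v` in another component, `a, b, v, x` is an induced `P₄`. Applying this to `G` and
to its complement, a finite cograph with at least two vertices is disconnected or co-disconnected.

Twins of a graph are twins of its complement, so let `G` be disconnected. If it has an edge, the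
component of that edge is a proper homogeneous set, and twins found inside it by induction are
twins of `G`; if it has no edge, any two vertices are twins. Conversely, `P₄` itself has no twins.
-/

open SimpleGraph

section Twins

variable {V W : Type*} {G : SimpleGraph V} {H : SimpleGraph W} {s : Set V}

/-- Two distinct vertices are twins if no third vertex distinguishes them by adjacency. The twins
may or may not be adjacent to each other. -/
def AreTwins (G : SimpleGraph V) (x y : V) : Prop :=
  x ≠ y ∧ ∀ z, z ≠ x → z ≠ y → (G.Adj z x ↔ G.Adj z y)

theorem AreTwins.compl {x y : V} (h : AreTwins G x y) : AreTwins Gᶜ x y :=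
  ⟨h.1, fun z hzx hzy ↦ by simp [hzx, hzy, h.2 z hzx hzy]⟩

theorem AreTwins.of_embedding {x y : V} (f : G ↪g H) (h : AreTwins H (f x) (f y)) :
    AreTwins G x y :=
  ⟨ne_of_apply_ne f h.1, fun z hzx hzy ↦ by
    simpa using h.2 (f z) (f.injective.ne hzx) (f.injective.ne hzy)⟩

theorem not_areTwins_pathGraph_four (x y : Fin 4) : ¬AreTwins (pathGraph 4) x y := by
  simp only [AreTwins, pathGraph_adj]
  decide +revert

/-- A set of vertices is homogeneous (a module of the graph) if no vertex outside it distinguishes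
two of its members by adjacency; twins of the subgraph it induces are twins of the whole graph. -/
def IsHomogeneous (G : SimpleGraph V) (s : Set V) : Prop :=
  ∀ z ∉ s, ∀ x ∈ s, ∀ y ∈ s, G.Adj z x ↔ G.Adj z y

theorem IsHomogeneous.areTwins (hs : IsHomogeneous G s) {x y : s}
    (h : AreTwins (G.induce s) x y) : AreTwins G x y := by
  refine ⟨Subtype.coe_injective.ne h.1, fun z hzx hzy ↦ ?_⟩
  by_cases hz : z ∈ s
  · exact h.2 ⟨z, hz⟩ (ne_of_apply_ne Subtype.val hzx) (ne_of_apply_ne Subtype.val hzy)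
  · exact hs z hz x x.2 y y.2

theorem isHomogeneous_supp (C : G.ConnectedComponent) : IsHomogeneous G C.supp := by
  intro z hz x hx y hy
  exact iff_of_false (fun h ↦ hz ((C.mem_supp_congr_adj h).2 hx))
    (fun h ↦ hz ((C.mem_supp_congr_adj h).2 hy))

theorem exists_areTwins_of_not_preconnected (hG : ¬G.Preconnected)
    (hsub : ∀ s : Set V, s ≠ Set.univ → s.Nontrivial → ∃ x y, AreTwins (G.induce s) x y) :
    ∃ x y, AreTwins G x y := by
  rcases eq_or_ne G ⊥ with rfl | hbot
  · have : Nontrivial V := by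
      simpa [preconnected_bot_iff_subsingleton, not_subsingleton_iff_nontrivial] using hG
    obtain ⟨x, y, hxy⟩ := exists_pair_ne V
    exact ⟨x, y, hxy, by simp⟩
  · obtain ⟨a, b, hab⟩ := ne_bot_iff_exists_adj.1 hbot
    let C := G.connectedComponentMk a
    have hC_ne : C.supp ≠ Set.univ := fun hC ↦ hG fun x y ↦
      ConnectedComponent.exact <|
        (Set.eq_univ_iff_forall.1 hC x).trans (Set.eq_univ_iff_forall.1 hC y).symm
    have hC_nontrivial : C.supp.Nontrivial :=
      ⟨a, rfl, b, (C.mem_supp_congr_adj hab).1 rfl, hab.ne⟩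
    obtain ⟨x, y, hxy⟩ := hsub C.supp hC_ne hC_nontrivial
    exact ⟨x, y, (isHomogeneous_supp C).areTwins hxy⟩

end Twins

section Connectivity

variable {V : Type*} {G : SimpleGraph V}

theorem exists_adj_mem_notMem_of_reachable {u w : V} (h : G.Reachable u w) {S : Set V}
    (hu : u ∈ S) (hw : w ∉ S) : ∃ a b, G.Reachable u a ∧ G.Adj a b ∧ a ∈ S ∧ b ∉ S := by
  obtain ⟨p⟩ := h
  obtain ⟨d, -, ⟨hua, ha⟩, hb⟩ :=
    p.exists_boundary_dart {z | G.Reachable u z ∧ z ∈ S} ⟨.rfl, hu⟩ fun h ↦ hw h.2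
  exact ⟨d.fst, d.snd, hua, d.adj, ha, fun h ↦ hb ⟨hua.trans d.adj.reachable, h⟩⟩

theorem exists_adj_and_reachable_induce_compl_singleton (hG : G.Preconnected) {v : V}
    (u : ({v}ᶜ : Set V)) :
    ∃ x : ({v}ᶜ : Set V), G.Adj v x ∧ (G.induce {v}ᶜ).Reachable u x := by
  let S : Set V := Subtype.val '' {z | (G.induce {v}ᶜ).Reachable u z}
  have hv : v ∉ S := by
    rintro ⟨z, -, hz⟩
    exact z.2 hz
  obtain ⟨_, b, -, hab, ⟨a, ha, rfl⟩, hb⟩ :=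
    exists_adj_mem_notMem_of_reachable (hG u v) (S := S) ⟨u, .rfl, rfl⟩ hv
  obtain rfl : b = v := by
    by_contra hbv
    have hab' : (G.induce {v}ᶜ).Adj a ⟨b, hbv⟩ := hab
    exact hb ⟨⟨b, hbv⟩, ha.trans hab'.reachable, rfl⟩
  exact ⟨a, hab.symm, ha⟩

end Connectivity

/-- `P₄` is self-complementary: the complement of the path `0 - 1 - 2 - 3` is the path
`1 - 3 - 0 - 2`. -/
def pathGraphFourIsoCompl : pathGraph 4 ≃g (pathGraph 4)ᶜ where
  toFun := ![1, 3, 0, 2]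
  invFun := ![2, 0, 3, 1]
  left_inv := by decide
  right_inv := by decide
  map_rel_iff' := by
    simp only [Equiv.coe_fn_mk, compl_adj, pathGraph_adj]
    decide

namespace IsCograph

variable {V W : Type*} {G : SimpleGraph V} {H : SimpleGraph W}

theorem of_embedding (f : G ↪g H) (h : IsCograph H) : IsCograph G :=
  ⟨fun e ↦ h.false (f.comp e)⟩

theorem compl (h : IsCograph G) : IsCograph Gᶜ :=
  ⟨fun e ↦ h.false <| Embedding.complEquiv.symm (e.comp pathGraphFourIsoCompl.symm.toEmbedding)⟩

theorem adj_of_adj_of_adj_of_adj (h : IsCograph G) {a b c d : V} (hab : G.Adj a b)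
    (hbc : G.Adj b c) (hcd : G.Adj c d) (hac : ¬G.Adj a c) (hbd : ¬G.Adj b d) : G.Adj a d := by
  by_contra had
  have hadj (i j : Fin 4) :
      G.Adj (![a, b, c, d] i) (![a, b, c, d] j) ↔ (pathGraph 4).Adj i j := by
    fin_cases i <;> fin_cases j <;>
      simp [pathGraph_adj, hab, hab.symm, hbc, hbc.symm, hcd, hcd.symm, hac, hbd, had,
        G.adj_comm c a, G.adj_comm d a, G.adj_comm d b]
  -- Distinct vertices of `P₄` have distinct neighborhoods.
  have hinj : Function.Injective ![a, b, c, d] := by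
    intro i j hij
    have hnbrs : ∀ k, (pathGraph 4).Adj i k ↔ (pathGraph 4).Adj j k := fun k ↦ by
      rw [← hadj, ← hadj, hij]
    simp only [pathGraph_adj] at hnbrs
    clear hij
    decide +revert
  exact h.false ⟨⟨_, hinj⟩, hadj _ _⟩

theorem preconnected_induce_compl_singleton (h : IsCograph G) (hG : G.Preconnected) {v : V}
    (hv : ¬G.IsUniversal v) : (G.induce {v}ᶜ).Preconnected := by
  obtain ⟨u, hvu, huv⟩ : ∃ u, v ≠ u ∧ ¬G.Adj v u := by simpa [IsUniversal] using hv
  let u' : ({v}ᶜ : Set V) := ⟨u, hvu.symm⟩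
  suffices hreach : ∀ w, (G.induce {v}ᶜ).Reachable u' w from
    fun w₁ w₂ ↦ (hreach w₁).symm.trans (hreach w₂)
  by_contra! hreach
  obtain ⟨w, hw⟩ := hreach
  obtain ⟨x, hvx, hwx⟩ := exists_adj_and_reachable_induce_compl_singleton hG w
  obtain ⟨y, hvy, huy⟩ := exists_adj_and_reachable_induce_compl_singleton hG u'
  obtain ⟨a, b, hua, hab, hva, hvb⟩ :=
    exists_adj_mem_notMem_of_reachable huy (S := {z | ¬G.Adj v z}) huv (by simpa using hvy)
  have not_adj_x {z : ({v}ᶜ : Set V)} (hz : (G.induce {v}ᶜ).Reachable u' z) : ¬G.Adj z x := by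
    intro hzx
    have hzx' : (G.induce {v}ᶜ).Adj z x := hzx
    exact hw ((hz.trans hzx'.reachable).trans hwx.symm)
  have hax : G.Adj a x := h.adj_of_adj_of_adj_of_adj hab (not_not.1 hvb).symm hvx
    (fun hav ↦ hva hav.symm) (not_adj_x (hua.trans hab.reachable))
  exact not_adj_x hua hax

theorem subsingleton_of_preconnected_of_preconnected_compl [Finite V] (h : IsCograph G)
    (hG : G.Preconnected) (hGc : Gᶜ.Preconnected) : Subsingleton V := by
  induction hn : Nat.card V using Nat.strong_induction_on generalizing V with
  | _ n ih =>
    by_contra hV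
    rw [not_subsingleton_iff_nontrivial] at hV
    let v := Classical.arbitrary V
    obtain ⟨x, hvx⟩ := hG.exists_adj_of_nontrivial v
    obtain ⟨y, hvy⟩ := hGc.exists_adj_of_nontrivial v
    have hcompl : (G.induce {v}ᶜ)ᶜ = Gᶜ.induce {v}ᶜ := by
      ext
      simp [Subtype.ext_iff]
    have hdelete : (G.induce {v}ᶜ).Preconnected :=
      h.preconnected_induce_compl_singleton hG fun hv ↦ hvy.2 (hv hvy.1)
    have hdelete_compl : (G.induce {v}ᶜ)ᶜ.Preconnected :=
      hcompl ▸ h.compl.preconnected_induce_compl_singleton hGc fun hv ↦ (hv hvx.ne).2 hvx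
    have hcard : Nat.card ({v}ᶜ : Set V) < n :=
      hn ▸ (Nat.card_coe_set_eq _).trans_lt (Set.ncard_lt_card (by simp))
    have := ih _ hcard (h.of_embedding (Embedding.induce _)) hdelete hdelete_compl rfl
    have hxy : x = y := congrArg Subtype.val <|
      Subsingleton.elim (⟨x, hvx.ne'⟩ : ({v}ᶜ : Set V)) ⟨y, hvy.ne'⟩
    exact hvy.2 (hxy ▸ hvx)

theorem exists_areTwins [Finite V] [Nontrivial V] (h : IsCograph G) : ∃ x y, AreTwins G x y := by
  induction hn : Nat.card V using Nat.strong_induction_on generalizing V with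
  | _ n ih =>
    have ih_induce {G : SimpleGraph V} (hG : IsCograph G) (s : Set V) (hs : s ≠ Set.univ)
        (hs_nontrivial : s.Nontrivial) : ∃ x y, AreTwins (G.induce s) x y := by
      have := hs_nontrivial.coe_sort
      have hcard : Nat.card s < n :=
        hn ▸ (Nat.card_coe_set_eq s).trans_lt (Set.ncard_lt_card hs)
      exact ih _ hcard (hG.of_embedding (Embedding.induce s)) rfl
    by_cases hG : G.Preconnected
    · have hGc : ¬Gᶜ.Preconnected := fun hGc ↦ not_subsingleton V <|
        h.subsingleton_of_preconnected_of_preconnected_compl hG hGc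
      obtain ⟨x, y, hxy⟩ := exists_areTwins_of_not_preconnected hGc (ih_induce h.compl)
      exact ⟨x, y, by simpa using hxy.compl⟩
    · exact exists_areTwins_of_not_preconnected hG (ih_induce h)

end IsCograph

theorem cograph_iff_every_induced_subgraph_has_twin_general {V : Type*} (G : SimpleGraph V) :
    IsCograph G ↔ ∀ s : Set V, s.Finite → s.Nontrivial → ∃ x y, AreTwins (G.induce s) x y := by
  refine ⟨fun h s hs hs_nontrivial ↦ ?_, fun h ↦ ⟨fun f ↦ ?_⟩⟩
  · have := hs.to_subtype
    have := hs_nontrivial.coe_sort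
    exact (h.of_embedding (Embedding.induce s)).exists_areTwins
  · have hrange : (Set.range f).Nontrivial :=
      ⟨f 0, ⟨0, rfl⟩, f 1, ⟨1, rfl⟩, f.injective.ne (by decide)⟩
    obtain ⟨x, y, hxy⟩ := h (Set.range f) (Set.finite_range f) hrange
    obtain ⟨i, rfl⟩ := f.isoInduceRange.surjective x
    obtain ⟨j, rfl⟩ := f.isoInduceRange.surjective y
    exact not_areTwins_pathGraph_four i j (hxy.of_embedding f.isoInduceRange.toEmbedding)

/-- A finite simple graph `G` is a cograph if and only if every induced subgraph of `G`
with at least two vertices has a twin: two distinct vertices `x`, `y` such that every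
other vertex is adjacent to `x` exactly when it is adjacent to `y`. -/
theorem cograph_iff_every_induced_subgraph_has_twin
    {V : Type*} [Fintype V] (G : SimpleGraph V) :
    IsCograph G ↔
      ∀ s : Set V, s.Nontrivial →
        ∃ x y : s, x ≠ y ∧
          ∀ z : s, z ≠ x → z ≠ y →
            ((G.induce s).Adj z x ↔ (G.induce s).Adj z y) :=
  (cograph_iff_every_induced_subgraph_has_twin_general G).trans
    ⟨fun h s ↦ h s s.toFinite, fun h s _ ↦ h s⟩
end

section
/- There exists a function f : ℕ → ℕ such that for every natural number k and every k-probe cograph G, every induced path in G has at most f(k) vertices. (An induced path in G is a subset of vertices whose induced subgraph is isomorphic to a path.) -/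
/-- `G` is a `k`-probe cograph if there are `k` independent sets `N 0, …, N (k-1)` of `G`
and a cograph `H` on the same vertex set such that every edge of `G` is an edge of `H`
and every edge of `H` not in `G` has both endpoints in a common `N i`. -/
def IsKProbeCograph {V : Type*} (k : ℕ) (G : SimpleGraph V) : Prop :=
  ∃ (N : Fin k → Set V) (H : SimpleGraph V),
    (∀ i : Fin k, ∀ x ∈ N i, ∀ y ∈ N i, ¬ G.Adj x y) ∧
    IsCograph H ∧
    (∀ x y, G.Adj x y → H.Adj x y) ∧
    (∀ x y, H.Adj x y → ¬ G.Adj x y → ∃ i : Fin k, x ∈ N i ∧ y ∈ N i)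

/-!
If `G` arises from the cograph `H` by means of the independent sets `N i`, and `x` is coloured by
the set of indices `i` with `x ∈ N i`, then two vertices are adjacent in `G` iff they are adjacent
in `H` and their colours are disjoint. All that matters about disjointness is that it is some
relation on the finite set of colours, so we bound the length of an induced path in a graph whose
adjacency is the conjunction of adjacency in a cograph and a relation between colours.

On the vertices of the path, `H` is a connected cograph, so it is a join of two parts `A` and `B`.
If `(a, b)` and `(a', b')` are edges of the path from `A` to `B` and `a`, `a'` have the same colour,
then `a'` is adjacent to `b` and `a` to `b'`; hence the path leaves `A`, and likewise `B`, at most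
once per colour, and some long segment of it lies within one part. Pick a vertex `b` in the other
part and shorten the segment so that `b` has no neighbour in it. Every vertex `w` of the segment is
adjacent to `b` in `H` but not in `G`, so the relation fails for the colours of `b` and `w`. As each
vertex of the segment has a neighbour there, the colour of `b` does not occur on the segment, and
induction on the number of colours applies.
-/

open SimpleGraph Finset

variable {V V' C : Type*}

theorem IsCograph.of_embedding_s7 {G : SimpleGraph V} {H : SimpleGraph V'} (hH : IsCograph H)
    (f : G ↪g H) : IsCograph G :=
  ⟨fun e => hH.false (e.trans f)⟩

theorem IsCograph.exists_chord {H : SimpleGraph V} (hH : IsCograph H) {a b c d : V}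
    (hab : H.Adj a b) (hbc : H.Adj b c) (hcd : H.Adj c d) :
    H.Adj a c ∨ H.Adj b d ∨ H.Adj a d := by
  by_contra! ⟨hac, hbd, had⟩
  have hac' : a ≠ c := by rintro rfl; exact had hcd
  have hbd' : b ≠ d := by rintro rfl; exact had hab
  have had' : a ≠ d := by rintro rfl; exact hbd hab.symm
  refine hH.false ⟨⟨![a, b, c, d], ?_⟩, ?_⟩
  · intro i j hij
    have := hab.ne
    have := hbc.ne
    have := hcd.ne
    fin_cases i <;> fin_cases j <;> simp_all
  · intro i j
    change H.Adj (![a, b, c, d] i) (![a, b, c, d] j) ↔ _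
    fin_cases i <;> fin_cases j <;> simp [pathGraph_adj, *, H.adj_comm b a, H.adj_comm c a,
      H.adj_comm c b, H.adj_comm d a, H.adj_comm d b, H.adj_comm d c]

/-- `P` is the vertex set of a join in `H`: it is the union of two nonempty sets that are
completely joined to each other. -/
def IsJoinOn (H : SimpleGraph V) (P : Set V) : Prop :=
  ∃ A B : Set V, A.Nonempty ∧ B.Nonempty ∧ A ∪ B = P ∧ H.IsCompleteBetween A B

theorem isJoinOn_pair {H : SimpleGraph V} {v w : V} (h : H.Adj v w) :
    IsJoinOn H {v, w} :=
  ⟨{v}, {w}, Set.singleton_nonempty v, Set.singleton_nonempty w, rfl, by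
    rintro _ rfl _ rfl
    exact h⟩

theorem IsJoinOn.insert_of_adj {H : SimpleGraph V} (hH : IsCograph H) {P : Set V}
    (hP : IsJoinOn H P) {v w : V} (hw : w ∈ P) (hwv : H.Adj w v) : IsJoinOn H (insert v P) := by
  obtain ⟨A, B, hA, hB, rfl, hAB⟩ := hP
  wlog hwA : w ∈ A generalizing A B
  · rw [Set.union_comm]
    exact this B A hB hA hAB.symm hw.symm (hw.resolve_left hwA)
  by_cases hvB : ∀ b ∈ B, H.Adj v b
  · refine ⟨insert v A, B, Set.insert_nonempty _ _, hB, Set.insert_union, ?_⟩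
    rintro a (rfl | ha) b hb
    · exact hvB b hb
    · exact hAB ha hb
  push Not at hvB
  obtain ⟨z, hz, hvz⟩ := hvB
  -- `v` moves to the side of `B` together with its non-neighbours in `A`: a neighbour `y` and a
  -- non-neighbour `x` of `v` in `A` are adjacent, as otherwise `x`, `z`, `y`, `v` induce a `P₄`.
  refine ⟨{y ∈ A | H.Adj y v}, insert v ({x ∈ A | ¬ H.Adj x v} ∪ B), ⟨w, hwA, hwv⟩,
    Set.insert_nonempty _ _, ?_, ?_⟩
  · ext x
    simp only [Set.mem_union, Set.mem_insert_iff, Set.mem_ofPred_eq]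
    tauto
  · rintro y ⟨hy, hyv⟩ _ (rfl | ⟨hx, hxv⟩ | hb)
    · exact hyv
    · rcases hH.exists_chord (hAB hx hz) (hAB hy hz).symm hyv with hxy | hzv | hxv'
      · exact hxy.symm
      · exact absurd hzv.symm hvz
      · exact absurd hxv' hxv
    · exact hAB hy hb

/-- Seinsche's theorem. -/
theorem IsCograph.exists_isCompleteBetween_compl [Finite V] [Nontrivial V] {H : SimpleGraph V}
    (hH : IsCograph H) (hconn : H.Preconnected) :
    ∃ A : Set V, A.Nonempty ∧ Aᶜ.Nonempty ∧ H.IsCompleteBetween A Aᶜ := by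
  have ⟨v₀⟩ : Nonempty V := inferInstance
  obtain ⟨w₀, hadj⟩ := hconn.exists_adj_of_nontrivial v₀
  obtain ⟨P, hle, hP⟩ := Finite.exists_le_maximal (isJoinOn_pair hadj)
  have hPuniv : P = Set.univ := by
    by_contra hne
    obtain ⟨v, hv⟩ := (Set.ne_univ_iff_exists_notMem P).1 hne
    obtain ⟨p⟩ := hconn v₀ v
    obtain ⟨d, -, hd, hd'⟩ := p.exists_boundary_dart P (hle (Set.mem_insert v₀ _)) hv
    have hins := hP.prop.insert_of_adj hH hd d.adj
    exact hd' (hP.le_of_ge hins (Set.subset_insert _ _) (Set.mem_insert _ _))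
  obtain ⟨A, B, hA, hB, hAB, hjoin⟩ := hP.prop
  have hBA : B = Aᶜ := (IsCompl.of_le hjoin.disjoint.le_bot (hAB.trans hPuniv).ge).compl_eq.symm
  subst hBA
  exact ⟨A, hA, hB, hjoin⟩

/-- `G` is obtained from a cograph by keeping exactly those edges whose end colours, with respect
to the vertex colouring `c`, are related by some fixed relation. The colouring need not be proper
for either graph. -/
def IsThinnedCograph (G : SimpleGraph V) (c : V → C) : Prop :=
  ∃ (H : SimpleGraph V) (D : C → C → Prop), IsCograph H ∧
    ∀ x y, G.Adj x y ↔ H.Adj x y ∧ D (c x) (c y)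

theorem IsThinnedCograph.comp_embedding {G : SimpleGraph V} {G' : SimpleGraph V'} {c : V → C}
    (hG : IsThinnedCograph G c) (f : G' ↪g G) : IsThinnedCograph G' (c ∘ f) := by
  obtain ⟨H, D, hH, hadj⟩ := hG
  exact ⟨H.comap f, D, hH.of_embedding_s7 (Embedding.comap f.toEmbedding H), fun x y =>
    f.map_adj_iff.symm.trans (hadj (f x) (f y))⟩

theorem IsKProbeCograph.exists_isThinnedCograph {k : ℕ} {G : SimpleGraph V}
    (hG : IsKProbeCograph k G) : ∃ c : V → Set (Fin k), IsThinnedCograph G c := by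
  obtain ⟨N, H, hN, hH, hGH, hHG⟩ := hG
  refine ⟨fun x => {i | x ∈ N i}, H, Disjoint, hH, fun x y => ⟨fun h => ⟨hGH x y h, ?_⟩, ?_⟩⟩
  · exact Set.disjoint_left.2 fun i hx hy => hN i x hx y hy h
  · rintro ⟨h, hdisj⟩
    by_contra hnot
    obtain ⟨i, hx, hy⟩ := hHG x y h hnot
    exact Set.disjoint_left.1 hdisj hx hy

/-- The embedding of `pathGraph m` into `pathGraph n` as the segment starting at `s`. -/
def pathGraphSegment {m n : ℕ} (s : ℕ) (h : s + m ≤ n) : pathGraph m ↪g pathGraph n where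
  toFun i := ⟨s + i, by omega⟩
  inj' i j hij := by
    simp only [Fin.mk.injEq] at hij
    omega
  map_rel_iff' {i j} := by
    change (pathGraph n).Adj ⟨s + i, _⟩ ⟨s + j, _⟩ ↔ _
    simp only [pathGraph_adj]
    omega

theorem exists_forall_not_adj_of_notMem_segment {m n s : ℕ} (h : s + (m + 1) ≤ n) {b : Fin n}
    (hb : ∀ i, pathGraphSegment s h i ≠ b) :
    ∃ g : pathGraph m ↪g pathGraph (m + 1),
      ∀ i, ¬ (pathGraph n).Adj b (pathGraphSegment s h (g i)) := by
  rcases lt_or_ge (b : ℕ) s with hbs | hsb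
  · refine ⟨pathGraphSegment 1 (by omega), fun i hadj => ?_⟩
    have : (b : ℕ) + 1 = s + (1 + i) ∨ s + (1 + i) + 1 = b := pathGraph_adj.1 hadj
    omega
  · have hbs : s + m < b := by
      by_contra! hle
      exact hb ⟨b - s, by omega⟩ (Fin.ext (Nat.add_sub_of_le hsb))
    refine ⟨pathGraphSegment 0 (by omega), fun i hadj => ?_⟩
    have : (b : ℕ) + 1 = s + (0 + i) ∨ s + (0 + i) + 1 = b := pathGraph_adj.1 hadj
    omega

open Classical in
/-- The places where the path `0, 1, …, n - 1` leaves the set `A`. -/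
noncomputable def exits {n : ℕ} (A : Set (Fin n)) : Finset (Fin n) :=
  {i | i ∈ A ∧ ∃ j ∉ A, (i : ℕ) + 1 = j}

theorem mem_exits {n : ℕ} {A : Set (Fin n)} {i : Fin n} :
    i ∈ exits A ↔ i ∈ A ∧ ∃ j ∉ A, (i : ℕ) + 1 = j := by
  simp [exits]

theorem card_exits_le {n : ℕ} {c : Fin n → C} {H : SimpleGraph (Fin n)} {D : C → C → Prop}
    (hadj : ∀ x y, (pathGraph n).Adj x y ↔ H.Adj x y ∧ D (c x) (c y)) {A : Set (Fin n)}
    (hA : H.IsCompleteBetween A Aᶜ) {S : Finset C} (hS : ∀ i, c i ∈ S) : #(exits A) ≤ #S := by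
  refine card_le_card_of_injOn c (fun i _ => hS i) fun i hi i' hi' hcol => ?_
  obtain ⟨hiA, j, hjA, hij⟩ := mem_exits.1 hi
  obtain ⟨hiA', j', hjA', hij'⟩ := mem_exits.1 hi'
  have hD : D (c i) (c j) := ((hadj i j).1 (pathGraph_adj.2 (.inl hij))).2
  have hD' : D (c i') (c j') := ((hadj i' j').1 (pathGraph_adj.2 (.inl hij'))).2
  have hij₁ := pathGraph_adj.1 ((hadj i' j).2 ⟨hA hiA' hjA, hcol ▸ hD⟩)
  have hij₂ := pathGraph_adj.1 ((hadj i j').2 ⟨hA hiA hjA', hcol ▸ hD'⟩)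
  omega

theorem mem_iff_mem_of_forall_notMem_exits {n : ℕ} {A : Set (Fin n)} {i j : Fin n} (hij : i ≤ j)
    (h : ∀ x, i ≤ x → x < j → x ∉ exits A ∪ exits Aᶜ) : i ∈ A ↔ j ∈ A := by
  obtain ⟨j, hj⟩ := j
  change (i : ℕ) ≤ j at hij
  induction j, hij using Nat.le_induction with
  | base => rfl
  | succ j hij ih =>
    have hj' : j < n := by omega
    rw [ih hj' fun x hix hxj => h x hix (hxj.trans (Nat.lt_succ_self j))]
    have hnot := h ⟨j, hj'⟩ hij (Nat.lt_succ_self j)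
    simp only [mem_union, mem_exits, not_or, not_and, not_exists] at hnot
    constructor
    · intro hjA
      by_contra hjA'
      exact hnot.1 hjA _ hjA' rfl
    · intro hjA'
      by_contra hjA
      exact hnot.2 hjA _ (not_not.2 hjA') rfl

theorem exists_segment_forall_mem_iff {n m : ℕ} (hm : 0 < m) {A : Set (Fin n)}
    (hn : (#(exits A ∪ exits Aᶜ) + 1) * m ≤ n) :
    ∃ (s : ℕ) (h : s + m ≤ n), ∀ i j, pathGraphSegment s h i ∈ A ↔ pathGraphSegment s h j ∈ A := by
  set X := exits A ∪ exits Aᶜ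
  -- One of the `#X + 1` disjoint blocks of length `m` contains no element of `X`.
  obtain ⟨q, hq, hqX⟩ : ∃ q ∈ range (#X + 1), q ∉ X.image fun x : Fin n => (x : ℕ) / m :=
    exists_mem_notMem_of_card_lt_card (by simpa [Nat.lt_succ_iff] using card_image_le)
  have hs : q * m + m ≤ n := by
    rw [← Nat.succ_mul]
    exact (Nat.mul_le_mul_right m (mem_range.1 hq)).trans hn
  refine ⟨q * m, hs, fun i j => ?_⟩
  wlog hij : i ≤ j generalizing i j
  · exact (this j i (le_of_not_ge hij)).symm
  refine mem_iff_mem_of_forall_notMem_exits (Nat.add_le_add_left hij _) fun x hix hxj hx => hqX ?_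
  have hix' : q * m + i ≤ x := hix
  have hxj' : (x : ℕ) < q * m + j := hxj
  refine mem_image.2 ⟨x, hx, (Nat.div_eq_iff hm).2 ?_⟩
  omega

theorem exists_pathGraph_embedding_forall_ne {n m : ℕ} (hm : 2 ≤ m) {c : Fin n → C}
    (hG : IsThinnedCograph (pathGraph n) c) {S : Finset C} (hS : ∀ i, c i ∈ S)
    (hn : (2 * #S + 1) * (m + 1) ≤ n) :
    ∃ f : pathGraph m ↪g pathGraph n, ∃ a ∈ S, ∀ i, c (f i) ≠ a := by
  obtain ⟨H, D, hH, hadj⟩ := hG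
  have hconn : H.Preconnected :=
    (pathGraph_preconnected n).mono fun x y h => ((hadj x y).1 h).1
  have : Nontrivial (Fin n) := Fin.nontrivial_iff_two_le.2 (by nlinarith)
  obtain ⟨A, hA, hAc, hjoin⟩ := hH.exists_isCompleteBetween_compl hconn
  have hexits : #(exits A ∪ exits Aᶜ) ≤ 2 * #S := by
    have hin := card_exits_le hadj hjoin hS
    have hout := card_exits_le hadj (A := Aᶜ) (by rw [compl_compl]; exact hjoin.symm) hS
    have := card_union_le (exits A) (exits Aᶜ)
    omega
  obtain ⟨s, hs, hconst⟩ := exists_segment_forall_mem_iff m.succ_pos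
    ((Nat.mul_le_mul_right (m + 1) (Nat.succ_le_succ hexits)).trans hn)
  obtain ⟨b, hb⟩ : ∃ b, ∀ i, H.Adj b (pathGraphSegment s hs i) := by
    by_cases h0 : pathGraphSegment s hs 0 ∈ A
    · obtain ⟨b, hb⟩ := hAc
      exact ⟨b, fun i => (hjoin ((hconst i 0).2 h0) hb).symm⟩
    · obtain ⟨b, hb⟩ := hA
      exact ⟨b, fun i => hjoin hb (mt (hconst i 0).1 h0)⟩
  obtain ⟨g, hg⟩ := exists_forall_not_adj_of_notMem_segment hs fun i => (hb i).ne'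
  let f : pathGraph m ↪g pathGraph n := g.trans (pathGraphSegment s hs)
  refine ⟨f, c b, hS b, fun i hi => ?_⟩
  have : Nontrivial (Fin m) := Fin.nontrivial_iff_two_le.2 hm
  obtain ⟨j, hij⟩ := (pathGraph_preconnected m).exists_adj_of_nontrivial i
  have hD : D (c (f i)) (c (f j)) := ((hadj _ _).1 (f.map_adj_iff.2 hij)).2
  exact hg j ((hadj _ _).2 ⟨hb (g j), hi ▸ hD⟩)

/-- A bound on the number of vertices of an induced path of a thinned cograph that uses at most `r`
colours. A path with `r + 1` colours has at most `2 * (r + 1)` exits, so one of `2 * (r + 1) + 1`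
blocks of it has none; one vertex of that block is dropped so that a given vertex outside it has no
neighbour left in it. -/
def thinnedPathBound : ℕ → ℕ
  | 0 => 0
  | r + 1 => (2 * (r + 1) + 1) * (thinnedPathBound r + 3)

theorem IsThinnedCograph.le_thinnedPathBound {n : ℕ} {c : Fin n → C}
    (hG : IsThinnedCograph (pathGraph n) c) {S : Finset C} (hS : ∀ i, c i ∈ S) :
    n ≤ thinnedPathBound #S := by
  classical
  induction hr : #S generalizing n S with
  | zero =>
    by_contra! hn
    exact notMem_empty _ (card_eq_zero.1 hr ▸ hS ⟨0, hn⟩)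
  | succ r ih =>
    by_contra! hn
    obtain ⟨f, a, ha, hf⟩ := exists_pathGraph_embedding_forall_ne
      (m := thinnedPathBound r + 2) (by omega) hG hS (by rw [hr]; exact hn.le)
    have := ih (hG.comp_embedding f) (S := S.erase a)
      (fun i => mem_erase.2 ⟨hf i, hS (f i)⟩) (by rw [card_erase_of_mem ha, hr]; rfl)
    omega

theorem induced_path_length_bound_general {k : ℕ} {G : SimpleGraph V} (hG : IsKProbeCograph k G)
    {W : Set V} {n : ℕ} (e : G.induce W ≃g pathGraph n) : n ≤ thinnedPathBound (2 ^ k) := by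
  obtain ⟨c, hc⟩ := hG.exists_isThinnedCograph
  have hpath := hc.comp_embedding (e.symm.toEmbedding.trans (Embedding.induce W))
  simpa using hpath.le_thinnedPathBound (S := univ) fun _ => mem_univ _

/-- There is a function `f` such that in every `k`-probe cograph, every induced path
(a vertex subset whose induced subgraph is isomorphic to a path graph) has at most
`f k` vertices. -/
theorem induced_path_length_bound :
    ∃ f : ℕ → ℕ, ∀ (k : ℕ) (V : Type) [Fintype V] (G : SimpleGraph V),
      IsKProbeCograph k G →
        ∀ (W : Set V) (n : ℕ),
          Nonempty (G.induce W ≃g SimpleGraph.pathGraph n) → n ≤ f k :=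
  ⟨fun k => thinnedPathBound (2 ^ k), fun _ _ _ _ hG _ _ ⟨e⟩ =>
    induced_path_length_bound_general hG e⟩
end
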